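/- Let 2 < q < 4 and μ ≥ (√3/2)·π. Then F_{6,q} is unbounded below on the mass-constraint set: for every M ∈ ℝ there exists u ∈ H¹(ℝ) with ‖u‖₂² = μ and F_{6,q}(u) < M. In particular no ground state of F_{6,q} at mass μ exists. -/

import Mathlib

open MeasureTheory Real Set

noncomputable section

/-- `u ∈ H¹(ℝ)` with weak derivative `u'`: `u` is continuous, square-integrable,
`u'` is square-integrable, and `u(b) − u(a) = ∫_a^b u'(t) dt` for all `a ≤ b`. -/
def IsH1 (u u' : ℝ → ℝ) : Prop :=
  Continuous u ∧ Integrable (fun x => (u x) ^ 2) ∧ Integrable (fun x => (u' x) ^ 2) ∧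
    ∀ a b : ℝ, a ≤ b → u b - u a = ∫ t in a..b, u' t

/-- The mass `‖u‖₂² = ∫_ℝ u(x)² dx`. -/
def mass (u : ℝ → ℝ) : ℝ := ∫ x, (u x) ^ 2

/-- `D_q(u) = (1/2)∫ u'² − (1/q)|u(0)|^q`. -/
def Dfun (q : ℝ) (u u' : ℝ → ℝ) : ℝ :=
  (1 / 2) * (∫ x, (u' x) ^ 2) - (1 / q) * |u 0| ^ q

/-- `F_{p,q}(u) = (1/2)∫ u'² − (1/p)∫ |u|^p − (1/q)|u(0)|^q`. -/
def Ffun (p q : ℝ) (u u' : ℝ → ℝ) : ℝ :=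
  (1 / 2) * (∫ x, (u' x) ^ 2) - (1 / p) * (∫ x, |u x| ^ p) - (1 / q) * |u 0| ^ q

/-!
The dilation `u_L(x) = √L u(Lx)` preserves the mass, multiplies `∫ u'²` by `L²`, and multiplies
`∫ |u|^p` by `L^(p/2 - 1)`, which is again `L²` at the critical exponent `p = 6`. So if
`(1/2)∫ u'² ≤ (1/6)∫ u⁶` and `u(0) ≠ 0`, then the point term alone gives
`F_{6,q}(u_L) ≤ -(1/q) L^(q/2) |u(0)|^q → -∞`. The sextic soliton `u = √(a sech x)` has mass `aπ`,
`∫ u'² = aπ/8` and `∫ u⁶ = a³π/2`, so it qualifies exactly when `a ≥ √3/2`, i.e. when its mass is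
at least `(√3/2)π`.
-/

open Filter Topology

section MassDilation

variable {L : ℝ}

/-- The mass-preserving dilation `u_L(x) = √L u(Lx)` of `u`, for `L > 0`. -/
def massDilation (L : ℝ) (u : ℝ → ℝ) (x : ℝ) : ℝ := √L * u (L * x)

lemma mass_massDilation (hL : 0 < L) (u : ℝ → ℝ) : mass (massDilation L u) = mass u := by
  simp only [mass, massDilation, mul_pow, Real.sq_sqrt hL.le]
  rw [integral_const_mul, Measure.integral_comp_mul_left (fun x => u x ^ 2) L,
    abs_of_pos (inv_pos.2 hL), smul_eq_mul, mul_inv_cancel_left₀ hL.ne']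

lemma abs_sqrt_mul_rpow (hL : 0 ≤ L) (p y : ℝ) : |√L * y| ^ p = L ^ (p / 2) * |y| ^ p := by
  rw [abs_mul, abs_of_nonneg (Real.sqrt_nonneg L),
    Real.mul_rpow (Real.sqrt_nonneg L) (abs_nonneg y), Real.rpow_div_two_eq_sqrt p hL]

lemma integral_abs_rpow_massDilation (hL : 0 < L) (p : ℝ) (u : ℝ → ℝ) :
    ∫ x, |massDilation L u x| ^ p = L ^ (p / 2 - 1) * ∫ x, |u x| ^ p := by
  simp only [massDilation, abs_sqrt_mul_rpow hL.le]
  rw [integral_const_mul, Measure.integral_comp_mul_left (fun x => |u x| ^ p) L,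
    abs_of_pos (inv_pos.2 hL), smul_eq_mul, ← mul_assoc, Real.rpow_sub_one hL.ne',
    div_eq_mul_inv (L ^ (p / 2))]

lemma Ffun_massDilation (hL : 0 < L) (p q : ℝ) (u u' : ℝ → ℝ) :
    Ffun p q (massDilation L u) (fun x => L * massDilation L u' x) =
      L ^ 2 * ((1 / 2) * ∫ x, u' x ^ 2) - L ^ (p / 2 - 1) * ((1 / p) * ∫ x, |u x| ^ p) -
        L ^ (q / 2) * ((1 / q) * |u 0| ^ q) := by
  have kinetic : ∫ x, (L * massDilation L u' x) ^ 2 = L ^ 2 * ∫ x, u' x ^ 2 := by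
    simp only [mul_pow L]
    rw [integral_const_mul]
    exact congrArg (L ^ 2 * ·) (mass_massDilation hL u')
  rw [Ffun, kinetic, integral_abs_rpow_massDilation hL, massDilation, mul_zero,
    abs_sqrt_mul_rpow hL.le]
  ring

lemma isH1_massDilation {u u' : ℝ → ℝ} (hu : IsH1 u u') (hL : 0 < L) :
    IsH1 (massDilation L u) (fun x => L * massDilation L u' x) := by
  obtain ⟨cont, int_sq, int_deriv_sq, ftc⟩ := hu
  refine ⟨by unfold massDilation; fun_prop, ?_, ?_, fun a b hab => ?_⟩
  · simp only [massDilation, mul_pow]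
    exact (int_sq.comp_mul_left' hL.ne').const_mul _
  · simp only [massDilation, mul_pow]
    exact ((int_deriv_sq.comp_mul_left' hL.ne').const_mul _).const_mul _
  · calc √L * u (L * b) - √L * u (L * a)
        = √L * ∫ t in L * a..L * b, u' t := by
          rw [← ftc _ _ (mul_le_mul_of_nonneg_left hab hL.le), mul_sub]
      _ = ∫ t in a..b, L * (√L * u' (L * t)) := by
          rw [← intervalIntegral.mul_integral_comp_mul_left, intervalIntegral.integral_const_mul,
            intervalIntegral.integral_const_mul, mul_left_comm]

lemma tendsto_Ffun_massDilation_atBot {p q : ℝ} {u u' : ℝ → ℝ} (hp : 6 ≤ p) (hq : 0 < q)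
    (hu : u 0 ≠ 0) (h : (1 / 2) * ∫ x, u' x ^ 2 ≤ (1 / p) * ∫ x, |u x| ^ p) :
    Tendsto (fun L => Ffun p q (massDilation L u) (fun x => L * massDilation L u' x))
      atTop atBot := by
  have point_pos : 0 < (1 / q) * |u 0| ^ q := by positivity
  have point_atTop : Tendsto (fun L : ℝ => L ^ (q / 2) * ((1 / q) * |u 0| ^ q)) atTop atTop :=
    (tendsto_rpow_atTop (half_pos hq)).atTop_mul_const point_pos
  refine tendsto_atBot_mono' _ ?_ (tendsto_neg_atTop_atBot.comp point_atTop)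
  filter_upwards [eventually_ge_atTop 1] with L hL
  rw [Ffun_massDilation (zero_lt_one.trans_le hL), Function.comp_apply]
  have bulk : L ^ 2 * ((1 / 2) * ∫ x, u' x ^ 2) ≤
      L ^ (p / 2 - 1) * ((1 / p) * ∫ x, |u x| ^ p) := by
    have kinetic_nonneg : 0 ≤ ∫ x, u' x ^ 2 := integral_nonneg fun x => sq_nonneg (u' x)
    have rpow_le : L ^ 2 ≤ L ^ (p / 2 - 1) := by
      rw [← Real.rpow_two]
      exact Real.rpow_le_rpow_of_exponent_le hL (by linarith)
    exact mul_le_mul rpow_le h (mul_nonneg one_half_pos.le kinetic_nonneg) (by positivity)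
  linarith

end MassDilation

section Sech

-- The substitution `y = sinh x` turns `dy / (1 + y²)` into `sech x dx`.
lemma cosh_smul_inv_one_add_sinh_sq (x : ℝ) :
    |cosh x| • (1 + sinh x ^ 2)⁻¹ = (cosh x)⁻¹ := by
  rw [abs_of_pos (cosh_pos x), ← cosh_sq', smul_eq_mul, sq, mul_inv,
    mul_inv_cancel_left₀ (cosh_pos x).ne']

lemma integrable_inv_cosh : Integrable fun x => (cosh x)⁻¹ := by
  have h := integrableOn_image_iff_integrableOn_abs_deriv_smul MeasurableSet.univ
    (fun x _ => (hasDerivAt_sinh x).hasDerivWithinAt) sinh_injective.injOn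
    (fun y : ℝ => (1 + y ^ 2)⁻¹)
  simp only [image_univ_of_surjective sinh_surjective, integrableOn_univ,
    cosh_smul_inv_one_add_sinh_sq] at h
  exact h.1 integrable_inv_one_add_sq

lemma integral_inv_cosh : ∫ x, (cosh x)⁻¹ = π := by
  have h := integral_image_eq_integral_abs_deriv_smul MeasurableSet.univ
    (fun x _ => (hasDerivAt_sinh x).hasDerivWithinAt) sinh_injective.injOn
    (fun y : ℝ => (1 + y ^ 2)⁻¹)
  simp only [image_univ_of_surjective sinh_surjective, setIntegral_univ,
    cosh_smul_inv_one_add_sinh_sq] at h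
  rw [← h, integral_univ_inv_one_add_sq]

lemma integrable_inv_cosh_pow {n : ℕ} (hn : n ≠ 0) : Integrable fun x => (cosh x)⁻¹ ^ n := by
  refine integrable_inv_cosh.mono (by fun_prop) (Eventually.of_forall fun x => ?_)
  have inv_cosh_nonneg : 0 ≤ (cosh x)⁻¹ := inv_nonneg.2 (cosh_pos x).le
  rw [norm_pow, Real.norm_of_nonneg inv_cosh_nonneg]
  exact pow_le_of_le_one inv_cosh_nonneg (inv_le_one_of_one_le₀ (one_le_cosh x)) hn

lemma integrable_tanh_mul_inv_cosh : Integrable fun x => tanh x * (cosh x)⁻¹ := by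
  refine integrable_inv_cosh.bdd_mul (c := 1) ?_ (Eventually.of_forall fun x => ?_)
  · exact (Continuous.div continuous_sinh continuous_cosh fun x => (cosh_pos x).ne').congr
      (fun x => (tanh_eq_sinh_div_cosh x).symm) |>.aestronglyMeasurable
  · exact (abs_tanh_lt_one x).le

lemma hasDerivAt_tanh_mul_inv_cosh (x : ℝ) :
    HasDerivAt (fun x => tanh x * (cosh x)⁻¹) (2 * (cosh x)⁻¹ ^ 3 - (cosh x)⁻¹) x := by
  have cosh_ne : cosh x ≠ 0 := (cosh_pos x).ne'
  simp only [tanh_eq_sinh_div_cosh]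
  refine (((hasDerivAt_sinh x).div (hasDerivAt_cosh x) cosh_ne).mul
    ((hasDerivAt_cosh x).inv cosh_ne)).congr_deriv ?_
  simp only [Pi.div_apply, Pi.inv_apply]
  field_simp
  linear_combination 2 * cosh_sq x

lemma integral_inv_cosh_pow_three : ∫ x, (cosh x)⁻¹ ^ 3 = π / 2 := by
  have integrable_two_mul := (integrable_inv_cosh_pow three_ne_zero).const_mul 2
  have h := integral_eq_zero_of_hasDerivAt_of_integrable hasDerivAt_tanh_mul_inv_cosh
    (integrable_two_mul.sub integrable_inv_cosh) integrable_tanh_mul_inv_cosh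
  rw [integral_sub integrable_two_mul integrable_inv_cosh, integral_const_mul,
    integral_inv_cosh] at h
  linarith

end Sech

lemma isH1_deriv {u : ℝ → ℝ} (hu : Differentiable ℝ u) (int_sq : Integrable fun x => u x ^ 2)
    (int_deriv_sq : Integrable fun x => deriv u x ^ 2) : IsH1 u (deriv u) := by
  refine ⟨hu.continuous, int_sq, int_deriv_sq, fun a b hab => ?_⟩
  have memLp_deriv : MemLp (deriv u) 2 :=
    (memLp_two_iff_integrable_sq (stronglyMeasurable_deriv u).aestronglyMeasurable).2 int_deriv_sq
  have int_deriv : IntervalIntegrable (deriv u) volume a b :=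
    (intervalIntegrable_iff_integrableOn_Ioc_of_le hab).2
      (memLp_deriv.restrict _ |>.integrable one_le_two)
  exact (intervalIntegral.integral_deriv_eq_sub (fun x _ => hu x) int_deriv).symm

section Soliton

variable {a : ℝ}

/-- The soliton profile `√(a sech x)` of the critical energy `(1/2)∫ u'² - (1/6)∫ |u|⁶`. It solves
the Euler–Lagrange equation only for `a = √3/2`; the amplitude is kept free to prescribe the
mass `aπ`. -/
def soliton (a x : ℝ) : ℝ := √(a * (cosh x)⁻¹)

lemma soliton_pos (ha : 0 < a) (x : ℝ) : 0 < soliton a x :=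
  Real.sqrt_pos.2 (mul_pos ha (inv_pos.2 (cosh_pos x)))

lemma soliton_sq (ha : 0 ≤ a) (x : ℝ) : soliton a x ^ 2 = a * (cosh x)⁻¹ :=
  Real.sq_sqrt (mul_nonneg ha (inv_nonneg.2 (cosh_pos x).le))

lemma hasDerivAt_soliton (ha : 0 < a) (x : ℝ) :
    HasDerivAt (soliton a) (-(tanh x / 2) * soliton a x) x := by
  have cosh_ne : cosh x ≠ 0 := (cosh_pos x).ne'
  have radicand_ne : a * (cosh x)⁻¹ ≠ 0 := mul_ne_zero ha.ne' (inv_ne_zero cosh_ne)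
  refine ((((hasDerivAt_cosh x).inv cosh_ne).const_mul a).sqrt radicand_ne).congr_deriv ?_
  change _ / (2 * soliton a x) = _
  rw [div_eq_iff (mul_ne_zero two_ne_zero (soliton_pos ha x).ne'), tanh_eq_sinh_div_cosh]
  calc a * (-sinh x / cosh x ^ 2) = -(sinh x / cosh x) * (a * (cosh x)⁻¹) := by field_simp
    _ = -(sinh x / cosh x / 2) * soliton a x * (2 * soliton a x) := by
      rw [← soliton_sq ha.le]; ring

lemma deriv_soliton_sq (ha : 0 < a) (x : ℝ) :
    deriv (soliton a) x ^ 2 = a / 4 * ((cosh x)⁻¹ - (cosh x)⁻¹ ^ 3) := by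
  have cosh_ne : cosh x ≠ 0 := (cosh_pos x).ne'
  rw [(hasDerivAt_soliton ha x).deriv, mul_pow, soliton_sq ha.le, tanh_eq_sinh_div_cosh]
  field_simp
  linear_combination -4 * cosh_sq x

lemma isH1_soliton (ha : 0 < a) : IsH1 (soliton a) (deriv (soliton a)) := by
  refine isH1_deriv (fun x => (hasDerivAt_soliton ha x).differentiableAt) ?_ ?_
  · simp only [soliton_sq ha.le]
    exact integrable_inv_cosh.const_mul _
  · simp only [deriv_soliton_sq ha]
    exact (integrable_inv_cosh.sub (integrable_inv_cosh_pow three_ne_zero)).const_mul _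

lemma mass_soliton (ha : 0 ≤ a) : mass (soliton a) = a * π := by
  simp only [mass, soliton_sq ha]
  rw [integral_const_mul, integral_inv_cosh]

lemma integral_sq_deriv_soliton (ha : 0 < a) : ∫ x, deriv (soliton a) x ^ 2 = a * π / 8 := by
  simp only [deriv_soliton_sq ha]
  rw [integral_const_mul,
    integral_sub integrable_inv_cosh (integrable_inv_cosh_pow three_ne_zero),
    integral_inv_cosh, integral_inv_cosh_pow_three]
  ring

lemma integral_abs_soliton_rpow_six (ha : 0 ≤ a) :
    ∫ x, |soliton a x| ^ (6 : ℝ) = a ^ 3 * π / 2 := by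
  have rpow_six (x : ℝ) : |soliton a x| ^ (6 : ℝ) = a ^ 3 * (cosh x)⁻¹ ^ 3 := by
    calc |soliton a x| ^ (6 : ℝ) = |soliton a x| ^ 6 := by norm_cast
      _ = (soliton a x ^ 2) ^ 3 := by rw [← sq_abs]; ring
      _ = a ^ 3 * (cosh x)⁻¹ ^ 3 := by rw [soliton_sq ha, mul_pow]
  simp only [rpow_six]
  rw [integral_const_mul, integral_inv_cosh_pow_three]
  ring

lemma kinetic_soliton_le_potential (ha : √3 / 2 ≤ a) :
    (1 / 2) * ∫ x, deriv (soliton a) x ^ 2 ≤ (1 / 6) * ∫ x, |soliton a x| ^ (6 : ℝ) := by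
  have a_pos : 0 < a := lt_of_lt_of_le (by positivity) ha
  have three_le : 3 / 4 ≤ a ^ 2 := by
    calc (3 / 4 : ℝ) = (√3 / 2) ^ 2 := by rw [div_pow, Real.sq_sqrt zero_le_three]; norm_num
      _ ≤ a ^ 2 := by gcongr
  rw [integral_sq_deriv_soliton a_pos, integral_abs_soliton_rpow_six a_pos.le]
  calc 1 / 2 * (a * π / 8) = a * π / 12 * (3 / 4) := by ring
    _ ≤ a * π / 12 * a ^ 2 := by gcongr
    _ = 1 / 6 * (a ^ 3 * π / 2) := by ring

end Soliton

theorem stmt10_general (q μ : ℝ) (hq : 0 < q) (hμ : (Real.sqrt 3 / 2) * Real.pi ≤ μ) :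
    (∀ M : ℝ, ∃ u u' : ℝ → ℝ, IsH1 u u' ∧ mass u = μ ∧ Ffun 6 q u u' < M) ∧
    ¬ (∃ u u' : ℝ → ℝ, IsH1 u u' ∧ mass u = μ ∧
        ∀ v v' : ℝ → ℝ, IsH1 v v' → mass v = μ → Ffun 6 q u u' ≤ Ffun 6 q v v') := by
  have amplitude : √3 / 2 ≤ μ / π := (le_div_iff₀ pi_pos).2 hμ
  have amplitude_pos : 0 < μ / π := lt_of_lt_of_le (by positivity) amplitude
  have unbounded (M : ℝ) : ∃ u u' : ℝ → ℝ, IsH1 u u' ∧ mass u = μ ∧ Ffun 6 q u u' < M := by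
    have energy_atBot := tendsto_Ffun_massDilation_atBot le_rfl hq
      (soliton_pos amplitude_pos 0).ne' (kinetic_soliton_le_potential amplitude)
    obtain ⟨L, energy_lt, hL⟩ :=
      ((energy_atBot.eventually_lt_atBot M).and (eventually_gt_atTop 0)).exists
    refine ⟨_, _, isH1_massDilation (isH1_soliton amplitude_pos) hL, ?_, energy_lt⟩
    rw [mass_massDilation hL, mass_soliton amplitude_pos.le, div_mul_cancel₀ _ pi_ne_zero]
  refine ⟨unbounded, ?_⟩
  rintro ⟨u, u', -, -, hmin⟩
  obtain ⟨v, v', hv, mass_v, energy_lt⟩ := unbounded (Ffun 6 q u u')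
  exact energy_lt.not_ge (hmin v v' hv mass_v)

theorem stmt10 (q μ : ℝ) (hq : 2 < q) (hq' : q < 4)
    (hμ : (Real.sqrt 3 / 2) * Real.pi ≤ μ) :
    (∀ M : ℝ, ∃ u u' : ℝ → ℝ, IsH1 u u' ∧ mass u = μ ∧ Ffun 6 q u u' < M) ∧
    ¬ (∃ u u' : ℝ → ℝ, IsH1 u u' ∧ mass u = μ ∧
        ∀ v v' : ℝ → ℝ, IsH1 v v' → mass v = μ → Ffun 6 q u u' ≤ Ffun 6 q v v') :=
  stmt10_general q μ (zero_lt_two.trans hq) hμ
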